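/- The Artin constant A = ∏_{p prime} (1 - 1/(p(p-1))) converges to a positive real number, and 0.373 < A < 0.374. -/

import Mathlib

/-!
Each factor of the Artin product splits as
`1 - 1 / (p (p - 1)) = (1 - p⁻²) (1 - 1 / ((p - 1)² (p + 1)))`, so the Euler product for
`ζ(2) = π² / 6` gives `A = 6 / π² * ∏ₚ (1 - 1 / ((p - 1)² (p + 1)))`. The remaining product
converges much faster: its tail over `p ≥ N` is at least `1 - 1 / (2 (N - 1)²)`, by Weierstrass'
inequality and telescoping, so the primes below `32` suffice for the numerical bounds.
-/

open Finset Real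

section InfiniteProduct

variable {ι R : Type*} [CommRing R] [LinearOrder R] [IsStrictOrderedRing R] {f : ι → R}

lemma one_sub_sum_le_prod_one_sub {s : Finset ι} (hf_nonneg : ∀ i ∈ s, 0 ≤ f i)
    (hf_le : ∀ i ∈ s, f i ≤ 1) : 1 - ∑ i ∈ s, f i ≤ ∏ i ∈ s, (1 - f i) := by
  induction s using Finset.cons_induction with
  | empty => simp
  | cons a s ha ih =>
    rw [forall_mem_cons] at hf_nonneg hf_le
    have hsum : 0 ≤ ∑ i ∈ s, f i := sum_nonneg hf_nonneg.2
    rw [sum_cons, prod_cons]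
    calc 1 - (f a + ∑ i ∈ s, f i)
        ≤ (1 - f a) * (1 - ∑ i ∈ s, f i) := by linarith [mul_nonneg hf_nonneg.1 hsum]
      _ ≤ (1 - f a) * ∏ i ∈ s, (1 - f i) :=
        mul_le_mul_of_nonneg_left (ih hf_nonneg.2 hf_le.2) (sub_nonneg.2 hf_le.1)

variable [TopologicalSpace R] [OrderClosedTopology R] {a : R}

lemma hasProd_le_prod_of_le_one (hf_nonneg : ∀ i, 0 ≤ f i) (hf_le : ∀ i, f i ≤ 1)
    (h : HasProd f a) (s : Finset ι) : a ≤ ∏ i ∈ s, f i :=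
  (prod_anti_set_of_le_one hf_nonneg hf_le).le_of_tendsto h s

lemma prod_mul_one_sub_le_hasProd (hf_nonneg : ∀ i, 0 ≤ f i) (hf_le : ∀ i, f i ≤ 1)
    (h : HasProd (fun i => 1 - f i) a) {s : Finset ι} {ε : R}
    (htail : ∀ t : Finset ι, Disjoint s t → ∑ i ∈ t, f i ≤ ε) :
    (∏ i ∈ s, (1 - f i)) * (1 - ε) ≤ a := by
  classical
  refine ge_of_tendsto h (Filter.eventually_atTop.2 ⟨s, fun t hst => ?_⟩)
  rw [← prod_sdiff hst, mul_comm]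
  have htail_prod : 1 - ε ≤ ∏ i ∈ t \ s, (1 - f i) :=
    (sub_le_sub_left (htail _ disjoint_sdiff) 1).trans
      (one_sub_sum_le_prod_one_sub (fun i _ => hf_nonneg i) fun i _ => hf_le i)
  exact mul_le_mul_of_nonneg_right htail_prod (prod_nonneg fun i _ => sub_nonneg.2 (hf_le i))

end InfiniteProduct

lemma sum_le_of_le_sub_succ {α : Type*} [AddCommGroup α] [PartialOrder α] [IsOrderedAddMonoid α]
    {f g : ℕ → α} {N : ℕ} (hf : ∀ n, N ≤ n → 0 ≤ f n) (hg : ∀ n, N ≤ n → 0 ≤ g n)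
    (hfg : ∀ n, N ≤ n → f n ≤ g n - g (n + 1)) {s : Finset ℕ} (hs : ∀ n ∈ s, N ≤ n) :
    ∑ n ∈ s, f n ≤ g N := by
  obtain ⟨M, hNM, hsM⟩ : ∃ M, N ≤ M ∧ s ⊆ range M :=
    ⟨max N (s.sup id + 1), le_max_left _ _,
      s.subset_range_sup_succ.trans (range_mono (le_max_right _ _))⟩
  have hsub : s ⊆ Ico N M := fun n hn => mem_Ico.2 ⟨hs n hn, mem_range.1 (hsM hn)⟩
  calc ∑ n ∈ s, f n ≤ ∑ n ∈ Ico N M, f n :=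
        sum_le_sum_of_subset_of_nonneg hsub fun n hn _ => hf n (mem_Ico.1 hn).1
    _ ≤ ∑ n ∈ Ico N M, (g n - g (n + 1)) := sum_le_sum fun n hn => hfg n (mem_Ico.1 hn).1
    _ = g N - g M := by
      rw [← neg_sub (g M), ← sum_Ico_sub g hNM, ← sum_neg_distrib]
      simp only [neg_sub]
    _ ≤ g N := sub_le_self _ (hg M hNM)

lemma hasProd_one_sub_one_div_prime_pow {k : ℕ} (hk : 1 < k) :
    HasProd (fun p : {p : ℕ // p.Prime} => 1 - 1 / (p.1 : ℝ) ^ k)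
      (∑' n : ℕ, 1 / (n : ℝ) ^ k)⁻¹ := by
  let F : ℕ →*₀ ℝ := invMonoidWithZeroHom.comp
    ((powMonoidWithZeroHom (by omega : k ≠ 0)).comp (Nat.castRingHom ℝ).toMonoidWithZeroHom)
  have hF : ∀ n, F n = 1 / (n : ℝ) ^ k := fun n => (one_div _).symm
  have hsummable : Summable fun n : ℕ => 1 / (n : ℝ) ^ k := summable_one_div_nat_pow.2 hk
  have hpos : 0 < ∑' n : ℕ, 1 / (n : ℝ) ^ k :=
    hsummable.tsum_pos (fun n => by positivity) 1 (by norm_num)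
  have heuler := EulerProduct.eulerProduct_completely_multiplicative_hasProd (f := F)
    (by simpa only [hF] using hsummable.norm)
  simp only [hF] at heuler
  have hinv := heuler.inv₀ hpos.ne'
  simp only [inv_inv] at hinv
  exact hinv

/-- The quantity `δ(x)` in `1 - 1 / (x (x - 1)) = (1 - x⁻²) (1 - δ(x))`: it measures how far a
factor of Artin's product is from the Euler factor of `1 / ζ(2)`. -/
noncomputable def artinDefect (x : ℝ) : ℝ := 1 / ((x - 1) ^ 2 * (x + 1))

namespace artinDefect

lemma one_sub_one_div_mul_sub_one {x : ℝ} (h_zero : x ≠ 0) (h_one : x ≠ 1) (h_neg_one : x ≠ -1) :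
    1 - 1 / (x * (x - 1)) = (1 - 1 / x ^ 2) * (1 - artinDefect x) := by
  have h_sub : x - 1 ≠ 0 := sub_ne_zero.2 h_one
  have h_add : x + 1 ≠ 0 := fun h => h_neg_one (eq_neg_of_add_eq_zero_left h)
  rw [artinDefect]
  field_simp
  ring

lemma nonneg {x : ℝ} (hx : -1 ≤ x) : 0 ≤ artinDefect x :=
  one_div_nonneg.2 (mul_nonneg (sq_nonneg _) (by linarith))

lemma le_one {x : ℝ} (hx : 2 ≤ x) : artinDefect x ≤ 1 :=
  div_le_one_of_le₀ (one_le_mul_of_one_le_of_one_le (one_le_pow₀ (by linarith)) (by linarith))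
    (mul_nonneg (sq_nonneg _) (by linarith))

lemma le_one_div_sub_one_div {x : ℝ} (hx : 1 < x) :
    artinDefect x ≤ 1 / (2 * (x - 1) ^ 2) - 1 / (2 * x ^ 2) := by
  have h_sub : 0 < x - 1 := sub_pos.2 hx
  have h_diff : 1 / (2 * (x - 1) ^ 2) - 1 / (2 * x ^ 2) - artinDefect x
      = (x - 1) / (2 * x ^ 2 * (x - 1) ^ 2 * (x + 1)) := by
    rw [artinDefect]
    field_simp
    ring
  have : 0 ≤ (x - 1) / (2 * x ^ 2 * (x - 1) ^ 2 * (x + 1)) := by positivity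
  linarith

lemma sum_le {N : ℕ} (hN : 2 ≤ N) {s : Finset ℕ} (hs : ∀ n ∈ s, N ≤ n) :
    ∑ n ∈ s, artinDefect n ≤ 1 / (2 * ((N : ℝ) - 1) ^ 2) := by
  refine sum_le_of_le_sub_succ (f := fun n : ℕ => artinDefect n)
    (g := fun n : ℕ => 1 / (2 * ((n : ℝ) - 1) ^ 2)) (fun n _ => nonneg ?_)
    (fun n _ => by positivity) (fun n hn => ?_) hs
  · linarith [n.cast_nonneg (α := ℝ)]
  · have hn_lt : (1 : ℝ) < n := by exact_mod_cast hN.trans hn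
    simpa only [Nat.cast_succ, add_sub_cancel_right] using
      le_one_div_sub_one_div hn_lt

lemma sum_prime_le {N : ℕ} (hN : 2 ≤ N) {s : Finset {p : ℕ // p.Prime}} (hs : ∀ p ∈ s, N ≤ p.1) :
    ∑ p ∈ s, artinDefect p.1 ≤ 1 / (2 * ((N : ℝ) - 1) ^ 2) := by
  simpa only [sum_map, Function.Embedding.subtype_apply] using
    sum_le hN (s := s.map (Function.Embedding.subtype _)) (by simpa using hs)

lemma prime_nonneg (p : {p : ℕ // p.Prime}) : 0 ≤ artinDefect p.1 :=
  nonneg (by linarith [p.1.cast_nonneg (α := ℝ)])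

lemma prime_le_one (p : {p : ℕ // p.Prime}) : artinDefect p.1 ≤ 1 :=
  le_one (by exact_mod_cast p.2.two_le)

lemma multipliable_one_sub :
    Multipliable fun p : {p : ℕ // p.Prime} => 1 - artinDefect p.1 := by
  have hsummable : Summable fun p : {p : ℕ // p.Prime} => artinDefect p.1 :=
    summable_of_sum_le prime_nonneg fun s => sum_prime_le le_rfl fun p _ => p.2.two_le
  simpa only [sub_eq_add_neg] using Real.multipliable_one_add_of_summable hsummable.neg

lemma tprod_le_prod_primesBelow (N : ℕ) :
    ∏' p : {p : ℕ // p.Prime}, (1 - artinDefect p.1)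
      ≤ ∏ p ∈ N.primesBelow, (1 - artinDefect p) := by
  rw [← prod_subtype_of_mem _ fun _ => Nat.prime_of_mem_primesBelow]
  exact hasProd_le_prod_of_le_one (fun p => sub_nonneg.2 (prime_le_one p))
    (fun p => sub_le_self _ (prime_nonneg p)) multipliable_one_sub.hasProd _

lemma prod_primesBelow_mul_le_tprod {N : ℕ} (hN : 2 ≤ N) :
    (∏ p ∈ N.primesBelow, (1 - artinDefect p)) * (1 - 1 / (2 * ((N : ℝ) - 1) ^ 2))
      ≤ ∏' p : {p : ℕ // p.Prime}, (1 - artinDefect p.1) := by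
  rw [← prod_subtype_of_mem _ fun _ => Nat.prime_of_mem_primesBelow]
  refine prod_mul_one_sub_le_hasProd prime_nonneg prime_le_one multipliable_one_sub.hasProd
    fun t hdisj => sum_prime_le hN fun p hp => ?_
  by_contra! hlt
  exact disjoint_right.1 hdisj hp (mem_subtype.2 (Nat.mem_primesBelow.2 ⟨hlt, p.2⟩))

lemma prod_primesBelow_mem_Ioo :
    ∏ p ∈ Nat.primesBelow 32, (1 - artinDefect p) ∈ Set.Ioo 0.6151 0.6152 := by
  have hprimes : Nat.primesBelow 32 = {2, 3, 5, 7, 11, 13, 17, 19, 23, 29, 31} := by decide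
  rw [hprimes]
  norm_num [artinDefect]

lemma tprod_mem_Ioo :
    ∏' p : {p : ℕ // p.Prime}, (1 - artinDefect p.1) ∈ Set.Ioo 0.6147 0.6152 := by
  obtain ⟨hlower, hupper⟩ := prod_primesBelow_mem_Ioo
  refine ⟨lt_of_lt_of_le ?_ (prod_primesBelow_mul_le_tprod (N := 32) (by norm_num)),
    (tprod_le_prod_primesBelow 32).trans_lt hupper⟩
  norm_num at hlower ⊢
  linarith

end artinDefect

theorem hasProd_one_sub_one_div_prime_mul_sub_one :
    HasProd (fun p : {p : ℕ // p.Prime} => 1 - 1 / ((p.1 : ℝ) * ((p.1 : ℝ) - 1)))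
      (6 / π ^ 2 * ∏' p : {p : ℕ // p.Prime}, (1 - artinDefect p.1)) := by
  have hprod := (hasProd_one_sub_one_div_prime_pow one_lt_two).mul
    artinDefect.multipliable_one_sub.hasProd
  rw [hasSum_zeta_two.tsum_eq, inv_div] at hprod
  have hfactor : ∀ p : {p : ℕ // p.Prime}, 1 - 1 / ((p.1 : ℝ) * ((p.1 : ℝ) - 1)) =
      (1 - 1 / (p.1 : ℝ) ^ 2) * (1 - artinDefect p.1) := fun p => by
    have hp : (2 : ℝ) ≤ p.1 := by exact_mod_cast p.2.two_le
    apply artinDefect.one_sub_one_div_mul_sub_one <;> linarith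
  simpa only [hfactor] using hprod

theorem stmt_10 :
    Multipliable (fun p : {p : ℕ // p.Prime} => (1 - 1 / ((p.1 : ℝ) * ((p.1 : ℝ) - 1)))) ∧
    0 < ∏' p : {p : ℕ // p.Prime}, (1 - 1 / ((p.1 : ℝ) * ((p.1 : ℝ) - 1))) ∧
    0.373 < ∏' p : {p : ℕ // p.Prime}, (1 - 1 / ((p.1 : ℝ) * ((p.1 : ℝ) - 1))) ∧
    (∏' p : {p : ℕ // p.Prime}, (1 - 1 / ((p.1 : ℝ) * ((p.1 : ℝ) - 1)))) < 0.374 := by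
  have hA := hasProd_one_sub_one_div_prime_mul_sub_one
  obtain ⟨hC_lower, hC_upper⟩ := artinDefect.tprod_mem_Ioo
  have hπ_lower : 3.141592 ^ 2 < π ^ 2 := by gcongr; exact pi_gt_d6
  have hπ_upper : π ^ 2 < 3.141593 ^ 2 := by gcongr; exact pi_lt_d6
  have hlower : 0.373 < 6 / π ^ 2 * ∏' p : {p : ℕ // p.Prime}, (1 - artinDefect p.1) := by
    rw [div_mul_eq_mul_div, lt_div_iff₀ (by positivity)]
    linarith
  have hupper : 6 / π ^ 2 * ∏' p : {p : ℕ // p.Prime}, (1 - artinDefect p.1) < 0.374 := by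
    rw [div_mul_eq_mul_div, div_lt_iff₀ (by positivity)]
    linarith
  rw [hA.tprod_eq]
  exact ⟨hA.multipliable, by linarith, hlower, hupper⟩
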